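/- arXiv:2010.08244 — 2 statements merged into one kernel-verified Lean document; each statement's English description precedes it below -/
import Mathlib

section
/- Under Assumption 1, suppose α*, α̂ ∈ A are such that α* minimizes KL over A (i.e., KL_{α*} ≤ KL_α for all α ∈ A), α̂ minimizes f over A (i.e., f(α̂) ≤ f(α) for all α ∈ A), Assumption 2 holds at α*, namely f_u(α*) ≤ −log(C₄/γ₁), and γ₂ ≤ min(C₃/e, C₄/e). Then KL_{α*} ≤ KL_{α̂} ≤ KL_{α*} + C·γ₂² − C′·γ₂²·log γ₂, where C = (2·log C₆)/C₅ and C′ = 2/C₅. -/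
open MeasureTheory Real

/-!
On `S` the integrand of `f` is constant, so `f α` is the average, with weights `Z(S; α)` and
`Z(S̄; α)`, of `KL_α + C₁` and the mean of `log (p^m / p_α)` off `S`. By Jensen's inequality,
applied to `p^m / p_α` and to `p_α / p^m`, this mean lies between `-log (C₄ / Z(S̄; α))` and
`log (C₃ / Z(S̄; α))`, hence `f_l ≤ f ≤ f_u`.

Therefore `f_l(α̂) ≤ f_u(α*)`. By Assumption 2 the part of `f_l(α̂)` off `S` is at least `f_u(α*)`,
so the part on `S` is at most that: `KL_α̂ + C₁ ≤ f_u(α*)`. Unfolding `f_u(α*)` bounds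
`KL_α̂ - KL_α*` in terms of `Z(S̄; α*) / Z(S; α*)`, and Assumption 2 forces
`Z(S; α*) ≥ C₅ / γ₁`. In the resulting bound `γ₁` and `z = Z(S̄; α*)` are replaced by `γ₂`, using
`z log (γ₂ / z) ≤ γ₂`, the assumption `γ₂ ≤ C₄ / e` and the Cauchy-Schwarz inequality
`γ₂² ≤ C₃ C₄`.
-/

section WeightedAverage

variable {x y k k' m F : ℝ}

theorem le_of_weighted_average_le (hx : 0 < x) (hy : 0 ≤ y) (hF : (x * k + y * m) / (x + y) ≤ F)
    (hm : F ≤ m) : k ≤ F := by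
  rw [div_le_iff₀ (by positivity)] at hF
  have : x * k ≤ x * F := by linarith [mul_le_mul_of_nonneg_left hm hy]
  exact le_of_mul_le_mul_left this hx

theorem mul_sub_le_of_le_weighted_average (hx : 0 < x) (hy : 0 ≤ y) (hkk' : k ≤ k')
    (hk' : k' ≤ (x * k + y * m) / (x + y)) : x * (k' - k) ≤ y * (m - k) := by
  rw [le_div_iff₀ (by positivity)] at hk'
  linarith [mul_le_mul_of_nonneg_left hkk' hy]

end WeightedAverage

section Integral

variable {Ω : Type*} [MeasurableSpace Ω] {μ : Measure Ω} {u v : Ω → ℝ}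

theorem sq_integral_mul_le_integral_sq_mul_integral_sq
    (hu : Integrable (fun x => u x ^ 2) μ) (hv : Integrable (fun x => v x ^ 2) μ) :
    (∫ x, u x * v x ∂μ) ^ 2 ≤ (∫ x, u x ^ 2 ∂μ) * ∫ x, v x ^ 2 ∂μ := by
  by_cases huv : Integrable (fun x => u x * v x) μ
  · have hquad (t : ℝ) : 0 ≤ (∫ x, u x ^ 2 ∂μ) * (t * t) + (-2 * ∫ x, u x * v x ∂μ) * t +
        ∫ x, v x ^ 2 ∂μ :=
      calc
        0 ≤ ∫ x, (u x * t - v x) ^ 2 ∂μ := integral_nonneg fun x => sq_nonneg _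
        _ = ∫ x, u x ^ 2 * (t * t) - u x * v x * (2 * t) + v x ^ 2 ∂μ := by
          congr with x; ring
        _ = _ := by
          rw [integral_add (by exact (hu.mul_const _).sub (huv.mul_const _)) hv,
            integral_sub (hu.mul_const _) (huv.mul_const _), integral_mul_const,
            integral_mul_const]
          ring
    have hdiscrim := discrim_le_zero hquad
    unfold discrim at hdiscrim
    linarith
  · rw [integral_undef huv, zero_pow two_ne_zero]
    positivity

theorem sq_le_mul_of_isLUB_integral_mul {ι : Type*} {v : ι → Ω → ℝ} {g I : ℝ} (hg0 : 0 < g)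
    (hg : IsLUB (Set.range fun i => ∫ x, u x * v i x ∂μ) g)
    (hu : Integrable (fun x => u x ^ 2) μ) (hv : ∀ i, Integrable (fun x => v i x ^ 2) μ)
    (hI : ∀ i, ∫ x, v i x ^ 2 ∂μ ≤ I) : g ^ 2 ≤ (∫ x, u x ^ 2 ∂μ) * I := by
  have hu0 : 0 ≤ ∫ x, u x ^ 2 ∂μ := integral_nonneg fun x => sq_nonneg _
  have hsqrt : g ≤ √((∫ x, u x ^ 2 ∂μ) * I) := hg.2 <| Set.forall_mem_range.mpr fun i =>
    le_sqrt_of_sq_le <| (sq_integral_mul_le_integral_sq_mul_integral_sq hu (hv i)).trans <|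
      mul_le_mul_of_nonneg_left (hI i) hu0
  exact (le_sqrt' hg0).mp hsqrt

theorem mul_mul_log_div_le {a b c : ℝ} (ha : 0 ≤ a) (hb : 0 ≤ b) (hc : 0 < c) :
    a * b * log (a / b) ≤ a ^ 2 / c - a * b + a * b * log c := by
  rcases ha.eq_or_lt with rfl | ha
  · simp
  rcases hb.eq_or_lt with rfl | hb
  · simpa using div_nonneg (sq_nonneg a) hc.le
  have htangent : log (a / b) - log c ≤ a / b / c - 1 := by
    rw [← log_div (by positivity) hc.ne']
    exact log_le_sub_one_of_pos (by positivity)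
  calc
    a * b * log (a / b) ≤ a * b * (a / b / c - 1 + log c) := by gcongr; linarith
    _ = a ^ 2 / c - a * b + a * b * log c := by field_simp

/- Jensen's inequality for `log (u / v)` under the measure of density `u v / ∫ u v`, by integrating
the tangent line bound for `log` at `I / ∫ u v`. -/
theorem integral_mul_mul_log_div_le (hu : ∀ x, 0 ≤ u x) (hv : ∀ x, 0 ≤ v x)
    (huv : 0 < ∫ x, u x * v x ∂μ) (hu2 : Integrable (fun x => u x ^ 2) μ)
    (hlog : Integrable (fun x => u x * v x * log (u x / v x)) μ)
    {I : ℝ} (hI : ∫ x, u x ^ 2 ∂μ ≤ I) (hI0 : 0 < I) :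
    ∫ x, u x * v x * log (u x / v x) ∂μ ≤
      (∫ x, u x * v x ∂μ) * log (I / ∫ x, u x * v x ∂μ) := by
  have huv_int : Integrable (fun x => u x * v x) μ := .of_integral_ne_zero huv.ne'
  set z := ∫ x, u x * v x ∂μ with hz
  have hc : 0 < I / z := by positivity
  calc
    ∫ x, u x * v x * log (u x / v x) ∂μ
      ≤ ∫ x, u x ^ 2 / (I / z) - u x * v x + u x * v x * log (I / z) ∂μ :=
        integral_mono hlog (((hu2.div_const _).sub huv_int).add (huv_int.mul_const _))
          fun x => mul_mul_log_div_le (hu x) (hv x) hc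
    _ = (∫ x, u x ^ 2 ∂μ) / (I / z) - z + z * log (I / z) := by
        rw [integral_add (by exact (hu2.div_const _).sub huv_int) (huv_int.mul_const _),
          integral_sub (hu2.div_const _) huv_int, integral_div, integral_mul_const, ← hz]
    _ ≤ I / (I / z) - z + z * log (I / z) := by gcongr
    _ = z * log (I / z) := by rw [div_div_cancel₀ hI0.ne']; ring

theorem neg_le_integral_mul_mul_log_div (hu : ∀ x, 0 ≤ u x) (hv : ∀ x, 0 ≤ v x)
    (huv : 0 < ∫ x, u x * v x ∂μ) (hv2 : Integrable (fun x => v x ^ 2) μ)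
    (hlog : Integrable (fun x => u x * v x * log (u x / v x)) μ)
    {I : ℝ} (hI : ∫ x, v x ^ 2 ∂μ ≤ I) (hI0 : 0 < I) :
    -((∫ x, u x * v x ∂μ) * log (I / ∫ x, u x * v x ∂μ)) ≤
      ∫ x, u x * v x * log (u x / v x) ∂μ := by
  have hmul : (fun x => v x * u x) = fun x => u x * v x := funext fun x => mul_comm _ _
  have hswap : (fun x => v x * u x * log (v x / u x)) =
      fun x => -(u x * v x * log (u x / v x)) := by
    funext x
    rw [← inv_div, log_inv]; ring
  have hjensen := integral_mul_mul_log_div_le hv hu (hmul ▸ huv) hv2 (hswap ▸ hlog.neg) hI hI0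
  rw [hswap, hmul, integral_neg] at hjensen
  exact neg_le.mp hjensen

variable {S : Set Ω} {θ : Ω}

theorem setIntegral_eq_measureReal_mul (hS : MeasurableSet S) (hθ : θ ∈ S)
    (hu : ∀ x ∈ S, ∀ y ∈ S, u x = u y) : ∫ x in S, u x ∂μ = μ.real S * u θ := by
  rw [setIntegral_congr_fun hS fun x hx => hu x hx θ hθ, setIntegral_const, smul_eq_mul]

theorem measureReal_mul_le_one_of_integral_eq_one (hS : MeasurableSet S) (hθ : θ ∈ S)
    (hu : ∀ x ∈ S, ∀ y ∈ S, u x = u y) (hu0 : ∀ x, 0 ≤ u x) (hu1 : ∫ x, u x ∂μ = 1) :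
    μ.real S * u θ ≤ 1 := by
  rw [← setIntegral_eq_measureReal_mul hS hθ hu, ← hu1]
  exact setIntegral_le_integral (integrable_of_integral_eq_one hu1) (.of_forall hu0)

theorem log_inv_measureReal_div_nonneg (hS : MeasurableSet S) (hS0 : 0 < μ.real S) (hθ : θ ∈ S)
    (hu : ∀ x ∈ S, ∀ y ∈ S, u x = u y) (hu0 : ∀ x, 0 ≤ u x) (huθ : 0 < u θ)
    (hu1 : ∫ x, u x ∂μ = 1) : 0 ≤ log ((μ.real S)⁻¹ / u θ) := by
  refine log_nonneg ?_
  rw [one_le_div huθ, ← one_div, le_div_iff₀' hS0]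
  exact measureReal_mul_le_one_of_integral_eq_one hS hθ hu hu0 hu1

theorem setIntegral_mul_eq_mul_exp_neg_log (hS : MeasurableSet S) (hS0 : 0 < μ.real S)
    (hθ : θ ∈ S) (hu : ∀ x ∈ S, ∀ y ∈ S, u x = u y) (hv : ∀ x ∈ S, ∀ y ∈ S, v x = v y)
    (hvθ : 0 < v θ) :
    ∫ x in S, u x * v x ∂μ = u θ * exp (-log ((μ.real S)⁻¹ / v θ)) := by
  rw [setIntegral_eq_measureReal_mul hS hθ fun x hx y hy => by rw [hu x hx y hy, hv x hx y hy],
    ← log_inv, exp_log (by positivity)]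
  field_simp

theorem integral_mul_mul_log_div_eq_add_setIntegral_compl (hS : MeasurableSet S) (hθ : θ ∈ S)
    (hu : ∀ x ∈ S, ∀ y ∈ S, u x = u y) (hv : ∀ x ∈ S, ∀ y ∈ S, v x = v y)
    (hlog : Integrable (fun x => u x * v x * log (u x / v x)) μ) :
    ∫ x, u x * v x * log (u x / v x) ∂μ =
      (∫ x in S, u x * v x ∂μ) * log (u θ / v θ) +
        ∫ x in Sᶜ, u x * v x * log (u x / v x) ∂μ := by
  rw [← integral_add_compl hS hlog, ← integral_mul_const]
  congr 1
  exact setIntegral_congr_fun hS fun x hx => by simp only [hu x hx θ hθ, hv x hx θ hθ]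

theorem inv_mul_integral_mul_mul_log_div_le (hS : MeasurableSet S) (hθ : θ ∈ S)
    (hu : ∀ x ∈ S, ∀ y ∈ S, u x = u y) (hv : ∀ x ∈ S, ∀ y ∈ S, v x = v y)
    (hu0 : ∀ x, 0 ≤ u x) (hv0 : ∀ x, 0 ≤ v x)
    (hlog : Integrable (fun x => u x * v x * log (u x / v x)) μ)
    {X z I : ℝ} (hX : X = ∫ x in S, u x * v x ∂μ) (hz : z = ∫ x in Sᶜ, u x * v x ∂μ)
    (hz0 : 0 < z) (hu2 : IntegrableOn (fun x => u x ^ 2) Sᶜ μ)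
    (hI : ∫ x in Sᶜ, u x ^ 2 ∂μ ≤ I) (hI0 : 0 < I) :
    (X + z)⁻¹ * ∫ x, u x * v x * log (u x / v x) ∂μ ≤
      (X * log (u θ / v θ) + z * log (I / z)) / (X + z) := by
  have hX0 : 0 ≤ X := hX ▸ integral_nonneg fun x => mul_nonneg (hu0 x) (hv0 x)
  rw [inv_mul_eq_div,
    integral_mul_mul_log_div_eq_add_setIntegral_compl hS hθ hu hv hlog, ← hX]
  gcongr
  subst hz
  exact integral_mul_mul_log_div_le hu0 hv0 hz0 hu2 hlog.integrableOn hI hI0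

theorem le_inv_mul_integral_mul_mul_log_div (hS : MeasurableSet S) (hθ : θ ∈ S)
    (hu : ∀ x ∈ S, ∀ y ∈ S, u x = u y) (hv : ∀ x ∈ S, ∀ y ∈ S, v x = v y)
    (hu0 : ∀ x, 0 ≤ u x) (hv0 : ∀ x, 0 ≤ v x)
    (hlog : Integrable (fun x => u x * v x * log (u x / v x)) μ)
    {X z I : ℝ} (hX : X = ∫ x in S, u x * v x ∂μ) (hz : z = ∫ x in Sᶜ, u x * v x ∂μ)
    (hz0 : 0 < z) (hv2 : IntegrableOn (fun x => v x ^ 2) Sᶜ μ)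
    (hI : ∫ x in Sᶜ, v x ^ 2 ∂μ ≤ I) (hI0 : 0 < I) :
    (X * log (u θ / v θ) + z * -log (I / z)) / (X + z) ≤
      (X + z)⁻¹ * ∫ x, u x * v x * log (u x / v x) ∂μ := by
  have hX0 : 0 ≤ X := hX ▸ integral_nonneg fun x => mul_nonneg (hu0 x) (hv0 x)
  rw [inv_mul_eq_div,
    integral_mul_mul_log_div_eq_add_setIntegral_compl hS hθ hu hv hlog, ← hX, mul_neg]
  gcongr
  subst hz
  exact neg_le_integral_mul_mul_log_div hu0 hv0 hz0 hv2 hlog.integrableOn hI hI0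

theorem log_div_le_of_inv_mul_integral_le (hS : MeasurableSet S) (hθ : θ ∈ S)
    (hu : ∀ x ∈ S, ∀ y ∈ S, u x = u y) (hv : ∀ x ∈ S, ∀ y ∈ S, v x = v y)
    (hu0 : ∀ x, 0 ≤ u x) (hv0 : ∀ x, 0 ≤ v x)
    (hlog : Integrable (fun x => u x * v x * log (u x / v x)) μ)
    {X z y I F : ℝ} (hX : X = ∫ x in S, u x * v x ∂μ) (hX0 : 0 < X)
    (hz : z = ∫ x in Sᶜ, u x * v x ∂μ) (hy0 : 0 < y) (hyz : y ≤ z)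
    (hv2 : IntegrableOn (fun x => v x ^ 2) Sᶜ μ) (hI : ∫ x in Sᶜ, v x ^ 2 ∂μ ≤ I) (hI0 : 0 < I)
    (hF : (X + z)⁻¹ * ∫ x, u x * v x * log (u x / v x) ∂μ ≤ F) (hFy : F ≤ -log (I / y)) :
    log (u θ / v θ) ≤ F := by
  have hz0 : 0 < z := hy0.trans_le hyz
  have hlower := le_inv_mul_integral_mul_mul_log_div hS hθ hu hv hu0 hv0 hlog hX hz hz0 hv2 hI hI0
  refine le_of_weighted_average_le hX0 hz0.le (hlower.trans hF) (hFy.trans ?_)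
  gcongr

end Integral

theorem mul_mul_sub_log_le {z y g h : ℝ} (hz : 0 < z) (hzg : z ≤ g) (hy : 0 ≤ y) (hyg : y ≤ g)
    (hh : log g ≤ h) : z * y * (h - log z) ≤ g ^ 2 * (h - log g + 1) := by
  have hg : 0 < g := hz.trans_le hzg
  have hlog : z * (log g - log z) ≤ g := by
    rw [← log_div hg.ne' hz.ne', mul_comm, ← le_div_iff₀ hz]
    exact log_le_self (by positivity)
  calc
    z * y * (h - log z) = z * y * (h - log g) + y * (z * (log g - log z)) := by ring
    _ ≤ g * g * (h - log g) + y * g := by gcongr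
    _ ≤ g * g * (h - log g) + g * g := by gcongr
    _ = g ^ 2 * (h - log g + 1) := by ring

theorem mul_exp_le_mul_exp_of_log_add_le {x y a b : ℝ} (hx : 0 < x) (hy : 0 < y)
    (h : log x + a ≤ log y + b) : x * exp a ≤ y * exp b := by
  simpa only [exp_add, exp_log hx, exp_log hy] using exp_le_exp.mpr h

theorem mul_sub_le_mul_sub_log {X z I c k k' : ℝ} (hX : 0 < X) (hz : 0 < z) (hI : 0 < I)
    (hk : 0 ≤ k) (hkk' : k ≤ k')
    (hk' : k' + c ≤ (X * (k + c) + z * log (I / z)) / (X + z)) :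
    X * (k' - k) ≤ z * (log I - c - log z) :=
  calc
    X * (k' - k) = X * (k' + c - (k + c)) := by ring
    _ ≤ z * (log (I / z) - (k + c)) :=
      mul_sub_le_of_le_weighted_average hX hz.le (by gcongr) hk'
    _ ≤ z * (log I - c - log z) := by
      rw [log_div hI.ne' hz.ne']
      exact mul_le_mul_of_nonneg_left (by linarith) hz.le

/- The quantities attached to `α*` are `K`, `z` and `fu`, while `K'` is attached to `α̂`. -/
theorem kl_le_add_of_le_upper_surrogate
    {K K' z fu γ₁ γ₂ C₁ C₂ C₃ C₄ : ℝ} (hK : 0 ≤ K) (hK' : 0 ≤ K') (hz : 0 < z) (hzγ : z ≤ γ₂)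
    (hγ₁ : 0 < γ₁) (hγ : γ₁ ≤ γ₂) (hC₂ : 0 < C₂) (hC₃ : 0 < C₃) (hC₄ : 0 < C₄)
    (hγC₄ : γ₂ ≤ C₄ / exp 1) (hγ_sq : γ₂ ^ 2 ≤ C₃ * C₄)
    (hfu : fu = (C₂ * exp (-K) * (K + C₁) + z * log (C₃ / z)) / (C₂ * exp (-K) + z))
    (hK'fu : K' + C₁ ≤ fu) (hA2 : fu ≤ -log (C₄ / γ₁)) :
    K' ≤ K + γ₂ ^ 2 / (C₄ * C₂ * exp C₁) * (log C₃ + log C₄ - C₁ - 2 * log γ₂) := by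
  have hγ₂ : 0 < γ₂ := hz.trans_le hzγ
  have hlogC₄ : log γ₂ + 1 ≤ log C₄ := by
    have := log_le_log hγ₂ hγC₄
    rw [log_div hC₄.ne' (exp_pos 1).ne', log_exp] at this
    linarith
  have hlogγ_sq : 2 * log γ₂ ≤ log C₃ + log C₄ := by
    have := log_le_log (by positivity) hγ_sq
    rwa [log_pow, log_mul hC₃.ne' hC₄.ne', Nat.cast_two] at this
  have hK'C₁ : K' + C₁ + log C₄ ≤ log γ₁ := by
    rw [log_div hC₄.ne' hγ₁.ne'] at hA2
    linarith
  have hlogC₃ : log γ₂ ≤ log C₃ - C₁ := by linarith [log_le_log hγ₁ hγ]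
  have hC₅ : 0 < C₄ * C₂ * exp C₁ := by positivity
  rcases le_total K' K with hle | hle
  · have : 0 ≤ log C₃ + log C₄ - C₁ - 2 * log γ₂ := by linarith
    exact hle.trans (le_add_of_nonneg_right (by positivity))
  have hgap : C₂ * exp (-K) * (K' - K) ≤ z * (log C₃ - C₁ - log z) :=
    mul_sub_le_mul_sub_log (by positivity) hz hC₃ hK hle (hfu ▸ hK'fu)
  have hC₅_le : C₄ * C₂ * exp C₁ ≤ γ₁ * (C₂ * exp (-K)) := by
    have := mul_exp_le_mul_exp_of_log_add_le hC₄ hγ₁ (by linarith : log C₄ + C₁ ≤ log γ₁ + -K)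
    linarith [mul_le_mul_of_nonneg_left this hC₂.le]
  rw [← sub_le_iff_le_add', div_mul_eq_mul_div, le_div_iff₀' hC₅]
  calc
    C₄ * C₂ * exp C₁ * (K' - K) ≤ γ₁ * (C₂ * exp (-K)) * (K' - K) :=
        mul_le_mul_of_nonneg_right hC₅_le (sub_nonneg.mpr hle)
    _ = γ₁ * (C₂ * exp (-K) * (K' - K)) := by ring
    _ ≤ γ₁ * (z * (log C₃ - C₁ - log z)) := by gcongr
    _ = z * γ₁ * (log C₃ - C₁ - log z) := by ring
    _ ≤ γ₂ ^ 2 * (log C₃ - C₁ - log γ₂ + 1) := mul_mul_sub_log_le hz hzγ hγ₁.le hγ hlogC₃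
    _ ≤ γ₂ ^ 2 * (log C₃ + log C₄ - C₁ - 2 * log γ₂) := by gcongr; linarith

theorem two_mul_log_sqrt_mul_mul_exp_neg {x y : ℝ} (hx : 0 < x) (hy : 0 < y) (c : ℝ) :
    2 * log √(x * y * exp (-c)) = log x + log y - c := by
  rw [log_sqrt (by positivity), log_mul (by positivity) (exp_pos _).ne', log_mul hx.ne' hy.ne',
    log_exp]
  ring

theorem log_div_add_log_div {x y z : ℝ} (hx : x ≠ 0) (hy : y ≠ 0) (hz : z ≠ 0) :
    log (x / y) + log (y / z) = log (x / z) := by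
  rw [← log_mul (div_ne_zero hx hy) (div_ne_zero hy hz), div_mul_div_cancel₀ hy]

theorem arml_theorem_informal_version_general
    {Ω : Type*} [MeasurableSpace Ω] {μ : Measure Ω}
    {S : Set Ω} (hSmeas : MeasurableSet S) (hS0 : 0 < μ S) (hSfin : μ S < ⊤)
    {pstar : Ω → ℝ} (hpstar_in : ∀ θ ∈ S, pstar θ = ((μ S).toReal)⁻¹)
    {pm : Ω → ℝ} (hpm_nonneg : ∀ θ, 0 ≤ pm θ)
    {A : Type*} {p : A → Ω → ℝ} (hp_pos : ∀ a θ, 0 < p a θ) (hp_dens : ∀ a, ∫ θ, p a θ ∂μ = 1)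
    (hpm_constS : ∀ θ ∈ S, ∀ θ' ∈ S, pm θ = pm θ')
    (hp_constS : ∀ a, ∀ θ ∈ S, ∀ θ' ∈ S, p a θ = p a θ')
    {θs : Ω} (hθsS : θs ∈ S) (hθs_pos : 0 < pm θs)
    {C₁ C₂ : ℝ} (hC₂ : C₂ = pm θs) (hC₁ : C₁ = log (pm θs / pstar θs))
    {KL : A → ℝ} (hKL : ∀ a, KL a = log (pstar θs / p a θs))
    {ZS ZSb : A → ℝ} (hZS : ∀ a, ZS a = ∫ θ in S, pm θ * p a θ ∂μ)
    (hZSb : ∀ a, ZSb a = ∫ θ in Sᶜ, pm θ * p a θ ∂μ)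
    {γ₁ γ₂ : ℝ} (hγ₁ : IsGLB (Set.range ZSb) γ₁) (hγ₁_pos : 0 < γ₁)
    (hγ₂ : IsLUB (Set.range ZSb) γ₂)
    {C₃ : ℝ} (hC₃ : C₃ = ∫ θ in Sᶜ, pm θ ^ 2 ∂μ)
    (hC₃_int : IntegrableOn (fun θ => pm θ ^ 2) Sᶜ μ) (hC₃_pos : 0 < C₃)
    {C₄ : ℝ} (hC₄_int : ∀ a, IntegrableOn (fun θ => p a θ ^ 2) Sᶜ μ)
    (hC₄ : IsLUB (Set.range fun a => ∫ θ in Sᶜ, p a θ ^ 2 ∂μ) C₄) (hC₄_pos : 0 < C₄)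
    {C₅ C₆ : ℝ} (hC₅ : C₅ = C₄ * C₂ * exp C₁) (hC₆ : C₆ = √(C₃ * C₄ * exp (-C₁)))
    {f fu : A → ℝ}
    (hf_int : ∀ a, Integrable (fun θ => pm θ * p a θ * log (pm θ / p a θ)) μ)
    (hf : ∀ a, f a = (ZS a + ZSb a)⁻¹ * ∫ θ, pm θ * p a θ * log (pm θ / p a θ) ∂μ)
    (hfu : ∀ a, fu a = (ZS a * (KL a + C₁) + ZSb a * log (C₃ / ZSb a)) / (ZS a + ZSb a))
    {C C' : ℝ} (hC : C = 2 * log C₆ / C₅) (hC' : C' = 2 / C₅)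
    {αs αh : A} (hαh : f αh ≤ f αs) (hA2 : fu αs ≤ -log (C₄ / γ₁)) (hγ₂C₄ : γ₂ ≤ C₄ / exp 1) :
    KL αh ≤ KL αs + C * γ₂ ^ 2 - C' * γ₂ ^ 2 * log γ₂ := by
  have hp_nonneg (a θ) : 0 ≤ p a θ := (hp_pos a θ).le
  have hγ₁_le (a) : γ₁ ≤ ZSb a := hγ₁.1 ⟨a, rfl⟩
  have hle_γ₂ (a) : ZSb a ≤ γ₂ := hγ₂.1 ⟨a, rfl⟩
  have hle_C₄ (a) : ∫ θ in Sᶜ, p a θ ^ 2 ∂μ ≤ C₄ := hC₄.1 ⟨a, rfl⟩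
  have hZSb_pos : 0 < ZSb αs := hγ₁_pos.trans_le (hγ₁_le αs)
  have hS_pos : 0 < μ.real S := ENNReal.toReal_pos hS0.ne' hSfin.ne
  have hpstar : pstar θs = (μ.real S)⁻¹ := hpstar_in θs hθsS
  have hC₂_pos : 0 < C₂ := hC₂ ▸ hθs_pos
  have hZS_eq (a) : ZS a = C₂ * exp (-KL a) := by
    rw [hZS, hKL, hC₂, hpstar, setIntegral_mul_eq_mul_exp_neg_log hSmeas hS_pos hθsS hpm_constS
      (hp_constS a) (hp_pos a θs)]
  have hKL_nonneg (a) : 0 ≤ KL a := by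
    rw [hKL, hpstar]
    exact log_inv_measureReal_div_nonneg hSmeas hS_pos hθsS (hp_constS a) (hp_nonneg a)
      (hp_pos a θs) (hp_dens a)
  have hlog_eq (a) : KL a + C₁ = log (pm θs / p a θs) := by
    rw [hKL, hC₁, add_comm, log_div_add_log_div hθs_pos.ne' (by rw [hpstar]; positivity)
      (hp_pos a θs).ne']
  have hf_le : f αs ≤ fu αs := by
    rw [hf, hfu, hlog_eq]
    exact inv_mul_integral_mul_mul_log_div_le hSmeas hθsS hpm_constS (hp_constS αs) hpm_nonneg
      (hp_nonneg αs) (hf_int αs) (hZS αs) (hZSb αs) hZSb_pos hC₃_int hC₃.ge hC₃_pos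
  have hKL_le : KL αh + C₁ ≤ fu αs := by
    rw [hlog_eq]
    exact log_div_le_of_inv_mul_integral_le hSmeas hθsS hpm_constS (hp_constS αh) hpm_nonneg
      (hp_nonneg αh) (hf_int αh) (hZS αh) (by rw [hZS_eq]; positivity) (hZSb αh) hγ₁_pos
      (hγ₁_le αh) (hC₄_int αh) (hle_C₄ αh) hC₄_pos (hf αh ▸ hαh.trans hf_le) hA2
  have hγ₂_sq : γ₂ ^ 2 ≤ C₃ * C₄ := hC₃ ▸ sq_le_mul_of_isLUB_integral_mul
    (hZSb_pos.trans_le (hle_γ₂ αs)) (funext hZSb ▸ hγ₂) hC₃_int hC₄_int hle_C₄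
  rw [hC, hC', hC₆, two_mul_log_sqrt_mul_mul_exp_neg hC₃_pos hC₄_pos, hC₅]
  convert kl_le_add_of_le_upper_surrogate (hKL_nonneg αs) (hKL_nonneg αh) hZSb_pos
    (hle_γ₂ αs) hγ₁_pos ((hγ₁_le αs).trans (hle_γ₂ αs)) hC₂_pos hC₃_pos hC₄_pos hγ₂C₄ hγ₂_sq
    (hZS_eq αs ▸ hfu αs) hKL_le hA2 using 1
  ring

/-- **Theorem 1 (full version).** Under Assumption 1 (the main-task likelihood `pm` and every
surrogate prior `p α` are constant on the small support set `S` of the uniform true prior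
`pstar`), if `α̂` minimizes the surrogate objective `f` over `A`, Assumption 2 holds at `α*`
(`f_u(α*) ≤ −log(C₄/γ₁)`), and `γ₂ ≤ min(C₃/e, C₄/e)`, then
`KL_{α*} ≤ KL_{α̂} ≤ KL_{α*} + C·γ₂² − C′·γ₂²·log γ₂` with `C = 2·log C₆/C₅`, `C′ = 2/C₅`. -/
theorem arml_theorem_informal_version
    {Ω : Type*} [MeasurableSpace Ω] (μ : Measure Ω)
    (S : Set Ω) (hSmeas : MeasurableSet S) (hS0 : 0 < μ S) (hSfin : μ S < ⊤)
    (pstar : Ω → ℝ)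
    (hpstar_in : ∀ θ ∈ S, pstar θ = ((μ S).toReal)⁻¹)
    (hpstar_out : ∀ θ ∉ S, pstar θ = 0)
    (pm : Ω → ℝ) (hpm_meas : Measurable pm) (hpm_nonneg : ∀ θ, 0 ≤ pm θ)
    {A : Type*} [Nonempty A]
    (p : A → Ω → ℝ) (hp_meas : ∀ a, Measurable (p a))
    (hp_pos : ∀ a θ, 0 < p a θ)
    (hp_dens : ∀ a, ∫ θ, p a θ ∂μ = 1)
    -- Assumption 1: `pm` and every `p α` are constant on `S`
    (hpm_constS : ∀ θ ∈ S, ∀ θ' ∈ S, pm θ = pm θ')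
    (hp_constS : ∀ a, ∀ θ ∈ S, ∀ θ' ∈ S, p a θ = p a θ')
    (θs : Ω) (hθsS : θs ∈ S) (hθs_pos : 0 < pm θs)
    (C₁ C₂ : ℝ) (hC₂ : C₂ = pm θs) (hC₁ : C₁ = Real.log (pm θs / pstar θs))
    (hC₁_nonpos : C₁ ≤ 0)
    (KL : A → ℝ) (hKL : ∀ a, KL a = Real.log (pstar θs / p a θs))
    (ZS ZSb : A → ℝ)
    (hZS : ∀ a, ZS a = ∫ θ in S, pm θ * p a θ ∂μ)
    (hZSb : ∀ a, ZSb a = ∫ θ in Sᶜ, pm θ * p a θ ∂μ)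
    (hZSb_int : ∀ a, IntegrableOn (fun θ => pm θ * p a θ) Sᶜ μ)
    (hZSb_pos : ∀ a, 0 < ZSb a)
    (γ₁ γ₂ : ℝ) (hγ₁ : IsGLB (Set.range ZSb) γ₁) (hγ₁_pos : 0 < γ₁)
    (hγ₂ : IsLUB (Set.range ZSb) γ₂)
    (C₃ : ℝ) (hC₃ : C₃ = ∫ θ in Sᶜ, (pm θ) ^ 2 ∂μ)
    (hC₃_int : IntegrableOn (fun θ => (pm θ) ^ 2) Sᶜ μ)
    (hC₃_pos : 0 < C₃)
    (C₄ : ℝ)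
    (hC₄_int : ∀ a, IntegrableOn (fun θ => (p a θ) ^ 2) Sᶜ μ)
    (hC₄ : IsLUB (Set.range fun a => ∫ θ in Sᶜ, (p a θ) ^ 2 ∂μ) C₄)
    (hC₄_pos : 0 < C₄)
    (C₅ C₆ : ℝ) (hC₅ : C₅ = C₄ * C₂ * Real.exp C₁)
    (hC₆ : C₆ = Real.sqrt (C₃ * C₄ * Real.exp (-C₁)))
    (f fu fl : A → ℝ)
    (hf_int : ∀ a,
      Integrable (fun θ => pm θ * p a θ * Real.log (pm θ / p a θ)) μ)
    (hf : ∀ a, f a = (ZS a + ZSb a)⁻¹ *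
      ∫ θ, pm θ * p a θ * Real.log (pm θ / p a θ) ∂μ)
    (hfu : ∀ a, fu a = (ZS a * (KL a + C₁) + ZSb a * Real.log (C₃ / ZSb a)) /
      (ZS a + ZSb a))
    (hfl : ∀ a, fl a = (ZS a * (KL a + C₁) - ZSb a * Real.log (C₄ / ZSb a)) /
      (ZS a + ZSb a))
    (C C' : ℝ) (hC : C = 2 * Real.log C₆ / C₅) (hC' : C' = 2 / C₅)
    (αs αh : A)
    (hαs_min : ∀ a, KL αs ≤ KL a)
    (hαh_min : ∀ a, f αh ≤ f a)
    -- Assumption 2 at α*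
    (hA2 : fu αs ≤ - Real.log (C₄ / γ₁))
    (hγ₂C₃ : γ₂ ≤ C₃ / Real.exp 1) (hγ₂C₄ : γ₂ ≤ C₄ / Real.exp 1) :
    KL αs ≤ KL αh ∧
      KL αh ≤ KL αs + C * γ₂ ^ 2 - C' * γ₂ ^ 2 * Real.log γ₂ := by
  exact ⟨hαs_min αh, arml_theorem_informal_version_general hSmeas hS0 hSfin hpstar_in hpm_nonneg
    hp_pos hp_dens hpm_constS hp_constS hθsS hθs_pos hC₂ hC₁ hKL hZS hZSb hγ₁ hγ₁_pos hγ₂ hC₃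
    hC₃_int hC₃_pos hC₄_int hC₄ hC₄_pos hC₅ hC₆ hf_int hf hfu hC hC' (hαh_min αs) hA2 hγ₂C₄⟩
end

section
/- Let C₁, C₂, C₃, C₄, γ₁, γ₂, K*, K̂, z*, ẑ be real numbers with C₁ ≤ 0, C₂ > 0, 0 < γ₁ ≤ γ₂, γ₂ ≤ C₃/e, γ₂ ≤ C₄/e, K* ≥ 0, K̂ ≥ 0, γ₁ ≤ z* ≤ γ₂, γ₁ ≤ ẑ ≤ γ₂. Set C₅ = C₄·C₂·e^{C₁}, C₆ = √(C₃·C₄·e^{−C₁}), x* = C₂·e^{−K*}, and x̂ = C₂·e^{−K̂}. Assume (i) K̂ + C₁ ≤ −log(C₄/γ₂), (ii) x̂ ≥ C₅/γ₂, (iii) x* ≥ C₅/γ₁, and (iv) (x̂/(x̂+ẑ))·(K̂+C₁) − (ẑ/(x̂+ẑ))·log(C₄/ẑ) ≤ (x*/(x*+z*))·(K*+C₁) + (z*/(x*+z*))·log(C₃/z*). Then K̂ ≤ K* + (2·γ₂²/C₅)·log(C₆/γ₂). -/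
open Real

/-!
Let `w* = z* / (x* + z*)` and `ŵ = ẑ / (x̂ + ẑ)`. Since `K̂ + C₁ ≤ 0` and `0 ≤ K*`, bounding the
complementary weights of `K̂ + C₁` and `K*` by `1` turns (iv) into
`K̂ ≤ K* + ŵ log (C₄ / ẑ) + w* log (C₃ e^{-C₁} / z*)`. As `z ↦ z log (C / z)` increases on
`(0, C / e]` and `1 / (x + z) ≤ γ₂ / C₅`, each logarithmic term is at most
`(γ₂² / C₅) log (C / γ₂)`, and `C₆` is the geometric mean of `C₄` and `C₃ e^{-C₁}`.
-/

lemma monotoneOn_mul_log_div (C : ℝ) :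
    MonotoneOn (fun z => z * log (C / z)) (Set.Ioc 0 (C / exp 1)) := by
  rintro y ⟨hy, hyC⟩ z ⟨hz, hzC⟩ hyz
  have hC : 0 < C := (div_pos_iff_of_pos_right (exp_pos 1)).1 (hy.trans_le hyC)
  have h_anti : log (C / y) / (C / y) ≤ log (C / z) / (C / z) :=
    log_div_self_antitoneOn ((le_div_comm₀ hz (exp_pos 1)).1 hzC)
      ((le_div_comm₀ hy (exp_pos 1)).1 hyC) (by gcongr)
  calc y * log (C / y) = C * (log (C / y) / (C / y)) := by field_simp
    _ ≤ C * (log (C / z) / (C / z)) := by gcongr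
    _ = z * log (C / z) := by field_simp

lemma log_div_nonneg_of_le_div_exp_one {C z : ℝ} (hz : 0 < z) (hzC : z ≤ C / exp 1) :
    0 ≤ log (C / z) :=
  log_nonneg ((one_le_exp zero_le_one).trans ((le_div_comm₀ hz (exp_pos 1)).1 hzC))

lemma tail_weight_mul_log_div_le {C D γ x z : ℝ} (hD : 0 < D) (hz : 0 < z) (hzγ : z ≤ γ)
    (hγC : γ ≤ C / exp 1) (hx : D / γ ≤ x) :
    z / (x + z) * log (C / z) ≤ γ ^ 2 / D * log (C / γ) := by
  have hγ : 0 < γ := hz.trans_le hzγ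
  have h_log : 0 ≤ log (C / γ) := log_div_nonneg_of_le_div_exp_one hγ hγC
  have h_inv : (x + z)⁻¹ ≤ γ / D := by
    rw [← inv_div D γ]
    exact inv_anti₀ (by positivity) (by linarith)
  have h_mono : z * log (C / z) ≤ γ * log (C / γ) :=
    monotoneOn_mul_log_div C ⟨hz, hzγ.trans hγC⟩ ⟨hγ, hγC⟩ hzγ
  have hxz : 0 < x + z := add_pos ((div_pos hD hγ).trans_le hx) hz
  calc z / (x + z) * log (C / z) = (x + z)⁻¹ * (z * log (C / z)) := by ring
    _ ≤ (x + z)⁻¹ * (γ * log (C / γ)) := by gcongr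
    _ ≤ γ / D * (γ * log (C / γ)) := by gcongr
    _ = γ ^ 2 / D * log (C / γ) := by ring

lemma two_mul_log_sqrt_mul_div {A B γ : ℝ} (hA : 0 < A) (hB : 0 < B) (hγ : γ ≠ 0) :
    2 * log (√(A * B) / γ) = log (A / γ) + log (B / γ) := by
  have hAB : 0 < A * B := mul_pos hA hB
  rw [log_div (sqrt_ne_zero'.2 hAB) hγ, log_sqrt hAB.le, log_mul hA.ne' hB.ne',
    log_div hA.ne' hγ, log_div hB.ne' hγ]
  ring

lemma weighted_add_tail_log_le {A c K x z : ℝ} (hA : A ≠ 0) (hK : 0 ≤ K) (hx : 0 ≤ x)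
    (hz : 0 < z) :
    x / (x + z) * (K + c) + z / (x + z) * log (A / z) ≤
      K + c + z / (x + z) * log (A * exp (-c) / z) := by
  have h_weights : x / (x + z) + z / (x + z) = 1 := by field_simp
  have h_log : log (A * exp (-c) / z) = log (A / z) - c := by
    rw [mul_div_right_comm, log_mul (div_ne_zero hA hz.ne') (exp_ne_zero _), log_exp,
      sub_eq_add_neg]
  have h_tail : 0 ≤ z / (x + z) * K := by positivity
  rw [h_log, eq_sub_of_add_eq h_weights]
  linarith

theorem arml_real_combination_step_general
    {C₁ C₃ C₄ C₅ γ Ks Kh xs xh zs zh : ℝ}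
    (hC₁ : C₁ ≤ 0) (hC₅ : 0 < C₅)
    (hγC₃ : γ ≤ C₃ / exp 1) (hγC₄ : γ ≤ C₄ / exp 1)
    (hKs : 0 ≤ Ks) (hKh : Kh + C₁ ≤ 0)
    (hzs : 0 < zs) (hzsγ : zs ≤ γ) (hzh : 0 < zh) (hzhγ : zh ≤ γ)
    (hxs : C₅ / γ ≤ xs) (hxh : C₅ / γ ≤ xh)
    (h : xh / (xh + zh) * (Kh + C₁) - zh / (xh + zh) * log (C₄ / zh) ≤
      xs / (xs + zs) * (Ks + C₁) + zs / (xs + zs) * log (C₃ / zs)) :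
    Kh ≤ Ks + 2 * γ ^ 2 / C₅ * log (√(C₃ * C₄ * exp (-C₁)) / γ) := by
  have hγ : 0 < γ := hzs.trans_le hzsγ
  have hC₃ : 0 < C₃ := (div_pos_iff_of_pos_right (exp_pos 1)).1 (hγ.trans_le hγC₃)
  have hC₄ : 0 < C₄ := (div_pos_iff_of_pos_right (exp_pos 1)).1 (hγ.trans_le hγC₄)
  have hxs_pos : 0 < xs := (div_pos hC₅ hγ).trans_le hxs
  have hxh_pos : 0 < xh := (div_pos hC₅ hγ).trans_le hxh
  have hγA : γ ≤ C₃ * exp (-C₁) / exp 1 := hγC₃.trans <| by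
    gcongr
    exact le_mul_of_one_le_right hC₃.le (one_le_exp (neg_nonneg.2 hC₁))
  have h_lower : Kh + C₁ ≤ xh / (xh + zh) * (Kh + C₁) := by
    have h_weight : xh / (xh + zh) ≤ 1 := div_le_one_of_le₀ (by linarith) (by positivity)
    simpa only [one_mul] using mul_le_mul_of_nonpos_right h_weight hKh
  have h_upper := weighted_add_tail_log_le (c := C₁) hC₃.ne' hKs hxs_pos.le hzs
  have h_tail_h := tail_weight_mul_log_div_le hC₅ hzh hzhγ hγC₄ hxh
  have h_tail_s := tail_weight_mul_log_div_le hC₅ hzs hzsγ hγA hxs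
  calc Kh ≤ Ks + γ ^ 2 / C₅ * (log (C₃ * exp (-C₁) / γ) + log (C₄ / γ)) := by linarith
    _ = Ks + 2 * γ ^ 2 / C₅ * log (√(C₃ * C₄ * exp (-C₁)) / γ) := by
      rw [← two_mul_log_sqrt_mul_div (by positivity) hC₄ hγ.ne', mul_right_comm C₃]
      ring

/-- **Real-number combination step** concluding the proof of the main theorem: from the bounds
(i)–(iii) and the inequality `f_l(α̂) ≤ f_u(α*)` expressed in (iv), conclude
`K̂ ≤ K* + (2γ₂²/C₅)·log(C₆/γ₂)`. -/
theorem arml_real_combination_step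
    (C₁ C₂ C₃ C₄ γ₁ γ₂ Ks Kh zs zh : ℝ)
    (hC₁ : C₁ ≤ 0) (hC₂ : 0 < C₂)
    (hγ₁_pos : 0 < γ₁) (hγ₁₂ : γ₁ ≤ γ₂)
    (hγ₂C₃ : γ₂ ≤ C₃ / Real.exp 1) (hγ₂C₄ : γ₂ ≤ C₄ / Real.exp 1)
    (hKs : 0 ≤ Ks) (hKh : 0 ≤ Kh)
    (hzs₁ : γ₁ ≤ zs) (hzs₂ : zs ≤ γ₂) (hzh₁ : γ₁ ≤ zh) (hzh₂ : zh ≤ γ₂)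
    (C₅ C₆ xs xh : ℝ)
    (hC₅ : C₅ = C₄ * C₂ * Real.exp C₁)
    (hC₆ : C₆ = Real.sqrt (C₃ * C₄ * Real.exp (-C₁)))
    (hxs : xs = C₂ * Real.exp (-Ks)) (hxh : xh = C₂ * Real.exp (-Kh))
    (h1 : Kh + C₁ ≤ - Real.log (C₄ / γ₂))
    (h2 : C₅ / γ₂ ≤ xh)
    (h3 : C₅ / γ₁ ≤ xs)
    (h4 : xh / (xh + zh) * (Kh + C₁) - zh / (xh + zh) * Real.log (C₄ / zh) ≤
      xs / (xs + zs) * (Ks + C₁) + zs / (xs + zs) * Real.log (C₃ / zs)) :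
    Kh ≤ Ks + 2 * γ₂ ^ 2 / C₅ * Real.log (C₆ / γ₂) := by
  have hγ₂ : 0 < γ₂ := hγ₁_pos.trans_le hγ₁₂
  have hC₄ : 0 < C₄ := (div_pos_iff_of_pos_right (exp_pos 1)).1 (hγ₂.trans_le hγ₂C₄)
  have hC₅_pos : 0 < C₅ := hC₅ ▸ by positivity
  have hKhC₁ : Kh + C₁ ≤ 0 :=
    h1.trans (neg_nonpos.2 (log_div_nonneg_of_le_div_exp_one hγ₂ hγ₂C₄))
  have hxs_ge : C₅ / γ₂ ≤ xs := (by gcongr : C₅ / γ₂ ≤ C₅ / γ₁).trans h3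
  rw [hC₆]
  exact arml_real_combination_step_general hC₁ hC₅_pos hγ₂C₃ hγ₂C₄ hKs hKhC₁
    (hγ₁_pos.trans_le hzs₁) hzs₂ (hγ₁_pos.trans_le hzh₁) hzh₂ hxs_ge h2 h4
end
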